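/- For a fixed non-square integer D, the set of primes p with Kronecker-Legendre symbol (D/p) = -1 has natural density 1/2 in the primes: #{p ≤ x prime : (D/p) = -1} ~ π(x)/2 as x → ∞. -/

import Mathlib

open Filter Asymptotics

/-!
By quadratic reciprocity `p ↦ (D/p)` is a character of the units modulo `4|D|` away from the primes
dividing `2D`, and it is nontrivial because `D` is not a square; it therefore takes the value `-1`
on exactly half of the reduced classes. It remains to know that primes are equidistributed among
reduced classes modulo `q`. For this, `∑ Λ(n) n⁻ˢ` over a fixed class extends continuously to
`1 ≤ re s` after its pole at `1` is removed, by nonvanishing of `L(1 + it, χ)`, and the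
Wiener–Ikehara theorem turns this into an asymptotic for the summatory function. The Tauberian step
smooths `e⁻ᵘ ∑_{k ≤ eᵘ} Λ(k)` with Fejér kernels: their Fourier transforms have compact support, so
only a bounded piece of the boundary line enters and the Riemann–Lebesgue lemma applies, while
monotonicity of the summatory function allows the smoothing to be undone.
-/

section FejerKernel

open MeasureTheory Topology FourierTransform ComplexConjugate
open scoped Convolution

/-- A Fejér-type kernel: a probability density on `ℝ` that is the Fourier transform of a continuous
function of compact support. -/
structure IsFejerKernel (K : ℝ → ℝ) : Prop where
  nonneg : ∀ w, 0 ≤ K w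
  integrable : Integrable K
  integral_eq_one : ∫ w, K w = 1
  exists_fourier_eq :
    ∃ φ : ℝ → ℂ, Continuous φ ∧ HasCompactSupport φ ∧ ∀ w, 𝓕 φ w = K w

lemma fourier_const_mul (c : ℂ) (φ : ℝ → ℂ) (w : ℝ) :
    𝓕 (fun t => c * φ t) w = c * 𝓕 φ w := by
  rw [Real.fourier_eq', Real.fourier_eq', ← integral_const_mul]
  simp only [smul_eq_mul, mul_left_comm]

lemma fourier_dilate (φ : ℝ → ℂ) {l : ℝ} (hl : 0 < l) (w : ℝ) :
    𝓕 (fun t => φ (l⁻¹ * t)) w = l * 𝓕 φ (l * w) := by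
  have hscale := Measure.integral_comp_mul_left
    (fun t : ℝ => Complex.exp (↑(-2 * Real.pi * inner ℝ t (l * w)) * Complex.I) • φ t) l⁻¹
  rw [inv_inv, abs_of_pos hl] at hscale
  rw [Real.fourier_eq', Real.fourier_eq', ← Complex.real_smul, ← hscale]
  congr! 5 with t
  simp only [RCLike.inner_apply, conj_trivial]
  field_simp

lemma fourier_ofReal_im_eq_zero_of_even {f : ℝ → ℝ} (hf : Function.Even f) (w : ℝ) :
    (𝓕 (fun x => (f x : ℂ)) w).im = 0 := by
  rw [← Complex.conj_eq_iff_im]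
  calc conj (𝓕 (fun x => (f x : ℂ)) w) = 𝓕⁻ (fun x => (f x : ℂ)) w := by
        rw [Real.fourier_eq', Real.fourierInv_eq', ← integral_conj]
        congr! 2
        simp [← Complex.exp_conj, map_ofNat]
    _ = 𝓕 (fun x => (f x : ℂ)) w := by
        rw [Real.fourierInv_eq_fourier_comp_neg]
        simp only [hf _]

namespace IsFejerKernel

lemma normalize {K : ℝ → ℝ} (hK0 : ∀ w, 0 ≤ K w) (hKi : Integrable K) (hKpos : 0 < ∫ w, K w)
    {φ : ℝ → ℂ} (hφc : Continuous φ) (hφs : HasCompactSupport φ) (hφ : ∀ w, 𝓕 φ w = K w) :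
    IsFejerKernel fun w => (∫ v, K v)⁻¹ * K w where
  nonneg w := mul_nonneg (inv_nonneg.2 hKpos.le) (hK0 w)
  integrable := hKi.const_mul _
  integral_eq_one := by rw [integral_const_mul, inv_mul_cancel₀ hKpos.ne']
  exists_fourier_eq := by
    refine ⟨fun t => ((∫ v, K v)⁻¹ : ℝ) * φ t, by fun_prop, hφs.mul_left, fun w => ?_⟩
    rw [fourier_const_mul, hφ, Complex.ofReal_mul]

/-- The square of the Fourier transform of an even bump function is nonnegative, and it is the
Fourier transform of a self-convolution. -/
lemma exists_isFejerKernel : ∃ K, IsFejerKernel K := by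
  let χ : ContDiffBump (0 : ℝ) := ⟨1, 2, by norm_num, by norm_num⟩
  let f : ℝ → ℂ := fun x => χ x
  have hf_smooth : ContDiff ℝ ((⊤ : ℕ∞) : WithTop ℕ∞) f :=
    Complex.ofRealCLM.contDiff.comp χ.contDiff
  have hf_supp : HasCompactSupport f := χ.hasCompactSupport.comp_left Complex.ofReal_zero
  have hf_int : Integrable f := hf_smooth.continuous.integrable_of_hasCompactSupport hf_supp
  let F := 𝓕 (hf_supp.toSchwartzMap hf_smooth)
  have hF : 𝓕 f = F := (SchwartzMap.fourier_coe (hf_supp.toSchwartzMap hf_smooth)).symm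
  have hF_real : ∀ w, F w = (F w).re := fun w =>
    Complex.ext rfl (hF ▸ fourier_ofReal_im_eq_zero_of_even (fun x => χ.neg x) w)
  have hF_sq : Integrable fun w => (F w).re ^ 2 := (F.memLp 2 volume).re.integrable_sq
  have hF_zero : (F 0).re ≠ 0 := by
    have : F 0 = ((∫ x, χ x : ℝ) : ℂ) := by
      rw [← hF, Real.fourier_eq', ← integral_complex_ofReal]
      simp [f]
    rw [this, Complex.ofReal_re]
    exact χ.integral_pos.ne'
  refine ⟨_, normalize (φ := f ⋆[ContinuousLinearMap.mul ℂ ℂ, volume] f)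
    (fun w => sq_nonneg _) hF_sq (integral_pos_of_integrable_nonneg_nonzero (x := 0) (by fun_prop)
      hF_sq (fun w => sq_nonneg _) (pow_ne_zero 2 hF_zero))
    (hf_supp.continuous_convolution_right _ hf_int.locallyIntegrable hf_smooth.continuous)
    (hf_supp.convolution _ hf_supp) fun w => ?_⟩
  rw [Real.fourier_mul_convolution_eq hf_int hf_int, hF, hF_real w]
  norm_cast
  rw [sq]

variable {K : ℝ → ℝ}

lemma dilate (hK : IsFejerKernel K) {l : ℝ} (hl : 0 < l) :
    IsFejerKernel fun w => l * K (l * w) where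
  nonneg w := mul_nonneg hl.le (hK.nonneg _)
  integrable := (hK.integrable.comp_mul_left' hl.ne').const_mul l
  integral_eq_one := by
    rw [integral_const_mul, Measure.integral_comp_mul_left, hK.integral_eq_one, abs_of_pos
      (inv_pos.2 hl), smul_eq_mul, mul_one, mul_inv_cancel₀ hl.ne']
  exists_fourier_eq := by
    obtain ⟨φ, hφc, hφs, hφ⟩ := hK.exists_fourier_eq
    refine ⟨fun t => φ (l⁻¹ * t), by fun_prop,
      hφs.comp_homeomorph (Homeomorph.mulLeft₀ l⁻¹ (by positivity)), fun w => ?_⟩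
    rw [fourier_dilate φ hl, hφ, Complex.ofReal_mul]

lemma tendsto_intervalIntegral_dilate (hK : IsFejerKernel K) {h : ℝ} (hh : 0 < h) :
    Tendsto (fun l => ∫ w in -h..h, l * K (l * w)) atTop (𝓝 1) := by
  have hlim := intervalIntegral_tendsto_integral hK.integrable
    (tendsto_neg_atTop_atBot.comp (tendsto_id.atTop_mul_const hh)) (tendsto_id.atTop_mul_const hh)
  rw [hK.integral_eq_one] at hlim
  refine hlim.congr fun l => ?_
  rw [intervalIntegral.integral_const_mul, intervalIntegral.mul_integral_comp_mul_left, mul_neg]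
  rfl

lemma intervalIntegral_le_one (hK : IsFejerKernel K) {h : ℝ} (hh : 0 ≤ h) :
    ∫ w in -h..h, K w ≤ 1 := by
  rw [intervalIntegral.integral_of_le (by linarith), ← hK.integral_eq_one]
  exact setIntegral_le_integral hK.integrable (Eventually.of_forall hK.nonneg)

lemma exists_lt_intervalIntegral {h c : ℝ} (hh : 0 < h) (hc : c < 1) :
    ∃ K, IsFejerKernel K ∧ c < ∫ w in -h..h, K w := by
  obtain ⟨K, hK⟩ := exists_isFejerKernel
  obtain ⟨l, hl, hcl⟩ := ((eventually_gt_atTop 0).and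
    ((hK.tendsto_intervalIntegral_dilate hh).eventually_const_lt hc)).exists
  exact ⟨_, hK.dilate hl, hcl⟩

end IsFejerKernel

end FejerKernel

section SmoothedTauberian

open MeasureTheory Set Topology FourierTransform Complex

lemma fourier_exp_mul (φ : ℝ → ℂ) (x u : ℝ) :
    𝓕 (fun t : ℝ => cexp (2 * Real.pi * I * t * x) * φ t) u = 𝓕 φ (u - x) := by
  rw [Real.fourier_eq', Real.fourier_eq']
  congr! 2 with t
  rw [smul_eq_mul, smul_eq_mul, ← mul_assoc, ← Complex.exp_add]
  congr 2
  simp only [RCLike.inner_apply, conj_trivial]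
  push_cast
  ring

lemma norm_exp_two_pi_I_mul_mul (t x : ℝ) : ‖cexp (2 * Real.pi * I * t * x)‖ = 1 := by
  convert norm_exp_ofReal_mul_I (2 * Real.pi * t * x) using 3
  push_cast
  ring

lemma integral_mul_fourier_sub {g φ : ℝ → ℂ} (hg : Integrable g) (hφ : Integrable φ) (x : ℝ) :
    ∫ u, g u * 𝓕 φ (u - x) = 𝓕⁻ (fun t => 𝓕 g t * φ t) x := by
  have hφx : Integrable fun t : ℝ => cexp (2 * Real.pi * I * t * x) * φ t :=
    hφ.bdd_mul (c := 1) (by fun_prop) (.of_forall fun t : ℝ => (norm_exp_two_pi_I_mul_mul t x).le)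
  have hswap : ∫ t : ℝ, 𝓕 g t * (cexp (2 * Real.pi * I * t * x) * φ t) =
      ∫ u, g u * 𝓕 (fun t : ℝ => cexp (2 * Real.pi * I * t * x) * φ t) u := by
    simpa only [flip_innerₗ] using!
      VectorFourier.integral_fourierIntegral_smul_eq_flip (L := innerₗ ℝ)
        Real.continuous_fourierChar continuous_inner hg hφx
  simp only [fourier_exp_mul] at hswap
  rw [← hswap, Real.fourierInv_eq']
  congr! 2 with t
  rw [smul_eq_mul, mul_left_comm]
  congr 2
  simp only [RCLike.inner_apply, conj_trivial]
  push_cast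
  ring

lemma tendsto_setIntegral_Ioi_exp_neg_mul {g : ℝ → ℂ} (hg : IntegrableOn g (Ioi 0)) :
    Tendsto (fun ε : ℝ => ∫ u in Ioi (0 : ℝ), cexp (-ε * u) * g u) (𝓝[>] 0)
      (𝓝 (∫ u in Ioi (0 : ℝ), g u)) := by
  refine tendsto_integral_filter_of_dominated_convergence (‖g ·‖)
    (.of_forall fun ε => (by fun_prop : Continuous _).aestronglyMeasurable.mul hg.1) ?_ hg.norm
    (.of_forall fun u => ?_)
  · filter_upwards [self_mem_nhdsWithin] with ε hε
    filter_upwards [ae_restrict_mem measurableSet_Ioi] with u hu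
    rw [norm_mul, norm_exp]
    refine mul_le_of_le_one_left (norm_nonneg _) (Real.exp_le_one_iff.2 ?_)
    simpa using (mul_pos (mem_Ioi.1 hε) (mem_Ioi.1 hu)).le
  · have hcont : Continuous fun ε : ℝ => cexp (-ε * u) * g u := by fun_prop
    simpa using (hcont.tendsto 0).mono_left nhdsWithin_le_nhds

variable {b : ℝ → ℂ} {H : ℂ → ℂ} {φ : ℝ → ℂ}

lemma tendsto_fourierInv_vertical_line (hH : ContinuousOn H {z | 0 ≤ z.re}) (hφc : Continuous φ)
    (hφs : HasCompactSupport φ) (x : ℝ) :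
    Tendsto (fun ε : ℝ => 𝓕⁻ (fun t : ℝ => H (ε + 2 * Real.pi * I * t) * φ t) x) (𝓝[>] 0)
      (𝓝 (𝓕⁻ (fun t : ℝ => H (2 * Real.pi * I * t) * φ t) x)) := by
  let line : ℝ × ℝ → ℂ := fun p => p.1 + 2 * Real.pi * I * p.2
  have hline_mem : ∀ p : ℝ × ℝ, 0 ≤ p.1 → line p ∈ {z : ℂ | 0 ≤ z.re} := fun p hp => by
    simpa [line] using hp
  have hcont : ∀ t, ContinuousOn (fun ε : ℝ => H (line (ε, t))) (Ici 0) := fun t =>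
    hH.comp (by fun_prop) fun ε hε => hline_mem (ε, t) hε
  obtain ⟨B, hB⟩ : ∃ B, ∀ p ∈ Icc (0 : ℝ) 1 ×ˢ tsupport φ, ‖H (line p)‖ ≤ B :=
    (isCompact_Icc.prod hφs).exists_bound_of_continuousOn
      (hH.comp (by fun_prop) fun p hp => hline_mem p hp.1.1)
  simp only [Real.fourierInv_eq']
  refine tendsto_integral_filter_of_dominated_convergence (fun t => B * ‖φ t‖) ?_ ?_
    ((hφc.integrable_of_hasCompactSupport hφs).norm.const_mul B) (.of_forall fun t => ?_)
  · filter_upwards [self_mem_nhdsWithin] with ε hε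
    have hHc : Continuous fun t : ℝ => H (ε + 2 * Real.pi * I * t) :=
      hH.comp_continuous (by fun_prop) fun t => hline_mem (ε, t) (mem_Ioi.1 hε).le
    simp only [smul_eq_mul, RCLike.inner_apply, conj_trivial]
    refine (Continuous.mul ?_ (hHc.mul hφc)).aestronglyMeasurable
    fun_prop
  · filter_upwards [Ioc_mem_nhdsGT zero_lt_one] with ε hε
    refine .of_forall fun t => ?_
    rw [norm_smul, norm_exp_ofReal_mul_I, one_mul, norm_mul]
    by_cases ht : t ∈ tsupport φ
    · gcongr
      exact hB (ε, t) ⟨⟨hε.1.le, hε.2⟩, ht⟩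
    · simp [image_eq_zero_of_notMem_tsupport ht]
  · have hlim : Tendsto (fun ε : ℝ => H (line (ε, t))) (𝓝[>] 0) (𝓝 (H (line (0, t)))) :=
      (hcont t 0 self_mem_Ici).tendsto.mono_left (nhdsWithin_mono _ Ioi_subset_Ici_self)
    simpa [line] using (hlim.mul_const (φ t)).const_mul (cexp (2 * Real.pi * (x * t) * I))

/-- This is the multiplication formula `∫ g 𝓕φ = ∫ 𝓕g φ` for the damped function
`g u = b u * exp (-ε u)` on the half-line. -/
lemma setIntegral_Ioi_exp_neg_mul_fourier_sub {M : ℝ} (hb : Measurable b) (hbM : ∀ u, ‖b u‖ ≤ M)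
    (hbH : ∀ z : ℂ, 0 < z.re → ∫ u in Ioi (0 : ℝ), b u * cexp (-z * u) = H z)
    (hφ : Integrable φ) (x : ℝ) {ε : ℝ} (hε : 0 < ε) :
    ∫ u in Ioi (0 : ℝ), cexp (-ε * u) * (b u * 𝓕 φ (u - x)) =
      𝓕⁻ (fun t : ℝ => H (ε + 2 * Real.pi * I * t) * φ t) x := by
  let g : ℝ → ℂ := (Ioi 0).indicator fun u => b u * cexp (-ε * u)
  have hg : Integrable g := by
    have hexp : IntegrableOn (fun u : ℝ => cexp (-ε * u)) (Ioi 0) :=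
      integrableOn_exp_mul_complex_Ioi (by simpa) 0
    exact integrable_indicator_iff measurableSet_Ioi |>.2
      (Integrable.bdd_mul hexp hb.aestronglyMeasurable (.of_forall hbM))
  have hg_fourier : ∀ t : ℝ, 𝓕 g t = H (ε + 2 * Real.pi * I * t) := fun t => by
    rw [← hbH _ (by simpa), Real.fourier_eq', ← integral_indicator measurableSet_Ioi]
    congr! 2 with u
    by_cases hu : u ∈ Ioi 0
    swap
    · simp [g, hu]
    simp only [g, indicator_of_mem hu, smul_eq_mul]
    rw [mul_left_comm, ← Complex.exp_add]
    congr 2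
    simp only [RCLike.inner_apply, conj_trivial]
    push_cast
    ring
  simp only [← hg_fourier]
  rw [← integral_mul_fourier_sub hg hφ,
    ← integral_indicator measurableSet_Ioi]
  congr! 2 with u
  by_cases hu : u ∈ Ioi 0
  · simp only [g, indicator_of_mem hu]
    ring
  · simp [g, hu]

lemma setIntegral_Ioi_mul_fourier_sub {M : ℝ} (hb : Measurable b) (hbM : ∀ u, ‖b u‖ ≤ M)
    (hH : ContinuousOn H {z | 0 ≤ z.re})
    (hbH : ∀ z : ℂ, 0 < z.re → ∫ u in Ioi (0 : ℝ), b u * cexp (-z * u) = H z)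
    (hφc : Continuous φ) (hφs : HasCompactSupport φ) (hφi : Integrable (𝓕 φ)) (x : ℝ) :
    ∫ u in Ioi (0 : ℝ), b u * 𝓕 φ (u - x) =
      𝓕⁻ (fun t : ℝ => H (2 * Real.pi * I * t) * φ t) x := by
  have habel : IntegrableOn (fun u => b u * 𝓕 φ (u - x)) (Ioi 0) :=
    ((hφi.comp_sub_right x).bdd_mul hb.aestronglyMeasurable (.of_forall hbM)).integrableOn
  refine tendsto_nhds_unique (tendsto_setIntegral_Ioi_exp_neg_mul habel)
    ((tendsto_fourierInv_vertical_line hH hφc hφs x).congr' ?_)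
  filter_upwards [self_mem_nhdsWithin] with ε hε using
    (setIntegral_Ioi_exp_neg_mul_fourier_sub hb hbM hbH
      (hφc.integrable_of_hasCompactSupport hφs) x hε).symm

lemma tendsto_setIntegral_Ioi_mul_fourier_sub {M : ℝ} (hb : Measurable b) (hbM : ∀ u, ‖b u‖ ≤ M)
    (hH : ContinuousOn H {z | 0 ≤ z.re})
    (hbH : ∀ z : ℂ, 0 < z.re → ∫ u in Ioi (0 : ℝ), b u * cexp (-z * u) = H z)
    (hφc : Continuous φ) (hφs : HasCompactSupport φ) (hφi : Integrable (𝓕 φ)) :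
    Tendsto (fun x => ∫ u in Ioi (0 : ℝ), b u * 𝓕 φ (u - x)) atTop (𝓝 0) := by
  simp only [setIntegral_Ioi_mul_fourier_sub hb hbM hH hbH hφc hφs hφi,
    Real.fourierInv_eq_fourier_neg]
  exact (Real.zero_at_infty_fourier _).comp
    (tendsto_neg_atTop_atBot.mono_right atBot_le_cocompact)

end SmoothedTauberian

section Tauberian

open MeasureTheory Set Topology FourierTransform Complex

lemma tendsto_setIntegral_Iic_mul_comp_sub {b K : ℝ → ℝ} {M : ℝ} (hb : Measurable b)
    (hbM : ∀ u, ‖b u‖ ≤ M) (hK : Integrable K) :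
    Tendsto (fun x => ∫ u in Iic (0 : ℝ), b u * K (u - x)) atTop (𝓝 0) := by
  have hshift : ∀ x, ∫ u in Iic (0 : ℝ), b u * K (u - x) =
      ∫ w, (Iic (-x)).indicator (fun w => b (w + x) * K w) w := fun x => by
    rw [← integral_indicator measurableSet_Iic, ← integral_add_right_eq_self _ x]
    congr! 2
    simp only [indicator, mem_Iic, add_sub_cancel_right, le_neg_iff_add_nonpos_right]
  simp only [hshift]
  rw [← integral_zero ℝ ℝ]
  refine tendsto_integral_filter_of_dominated_convergence (fun w => M * ‖K w‖)
    (.of_forall fun x => ?_) (.of_forall fun x => .of_forall fun w => ?_) (hK.norm.const_mul M)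
    (.of_forall fun w => ?_)
  · exact ((hb.comp (measurable_add_const x)).aestronglyMeasurable.mul hK.1).indicator
      measurableSet_Iic
  · refine (norm_indicator_le_norm_self _ _).trans ?_
    rw [norm_mul]
    gcongr
    exact hbM _
  · refine tendsto_const_nhds.congr' ?_
    filter_upwards [eventually_gt_atTop (-w)] with x hx
    rw [indicator_of_notMem (by simpa using by linarith)]

variable {B K : ℝ → ℝ} {A C h : ℝ}

lemma exp_sub_mul_le_of_monotone_exp_mul (hB : Monotone fun u => Real.exp u * B u) {x y : ℝ}
    (hxy : x ≤ y) : Real.exp (x - y) * B x ≤ B y := by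
  rw [Real.exp_sub, div_mul_eq_mul_div, div_le_iff₀ (Real.exp_pos y), mul_comm (B y)]
  exact hB hxy

lemma measurable_of_monotone_exp_mul (hB : Monotone fun u => Real.exp u * B u) : Measurable B := by
  have hB_eq : B = fun u => Real.exp (-u) * (Real.exp u * B u) := by
    ext u
    rw [← mul_assoc, ← Real.exp_add, neg_add_cancel, Real.exp_zero, one_mul]
  rw [hB_eq]
  exact (Real.measurable_exp.comp measurable_neg).mul hB.measurable

namespace IsFejerKernel

lemma integrable_comp_add_mul (hK : IsFejerKernel K) (hB : Measurable B)
    (hBC : ∀ u, ‖B u‖ ≤ C) (x : ℝ) : Integrable fun w => B (x + w) * K w :=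
  hK.integrable.bdd_mul (hB.comp (measurable_const_add x)).aestronglyMeasurable
    (.of_forall fun _ => hBC _)

lemma mul_le_integral (hK : IsFejerKernel K) (hB : Monotone fun u => Real.exp u * B u)
    (hB0 : ∀ u, 0 ≤ B u) (hBC : ∀ u, B u ≤ C) (hh : 0 ≤ h) (x : ℝ) :
    B x * (Real.exp (-2 * h) * ∫ w in -h..h, K w) ≤ ∫ w, B (x + h + w) * K w := by
  have hint := hK.integrable_comp_add_mul (measurable_of_monotone_exp_mul hB)
    (fun u => (Real.norm_of_nonneg (hB0 u)).trans_le (hBC u)) (x + h)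
  have hpoint : ∀ w ∈ Ioc (-h) h, B x * Real.exp (-2 * h) * K w ≤ B (x + h + w) * K w :=
    fun w hw => by
      refine mul_le_mul_of_nonneg_right ?_ (hK.nonneg w)
      rw [mul_comm]
      refine le_trans ?_ (exp_sub_mul_le_of_monotone_exp_mul hB (x := x) (by linarith [hw.1]))
      gcongr
      · exact hB0 x
      · linarith [hw.2]
  calc B x * (Real.exp (-2 * h) * ∫ w in -h..h, K w)
      = ∫ w in Ioc (-h) h, B x * Real.exp (-2 * h) * K w := by
        rw [intervalIntegral.integral_of_le (by linarith), integral_const_mul, mul_assoc]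
    _ ≤ ∫ w in Ioc (-h) h, B (x + h + w) * K w :=
        setIntegral_mono_on (hK.integrable.const_mul _).integrableOn hint.integrableOn
          measurableSet_Ioc hpoint
    _ ≤ ∫ w, B (x + h + w) * K w :=
        setIntegral_le_integral hint
          (.of_forall fun w => mul_nonneg (hB0 _) (hK.nonneg w))

lemma integral_le (hK : IsFejerKernel K) (hB : Monotone fun u => Real.exp u * B u)
    (hB0 : ∀ u, 0 ≤ B u) (hBC : ∀ u, B u ≤ C) (hh : 0 ≤ h) (x : ℝ) :
    ∫ w, B (x - h + w) * K w ≤ Real.exp (2 * h) * B x + C * (1 - ∫ w in -h..h, K w) := by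
  have hint := hK.integrable_comp_add_mul (measurable_of_monotone_exp_mul hB)
    (fun u => (Real.norm_of_nonneg (hB0 u)).trans_le (hBC u)) (x - h)
  have hinside : ∫ w in Ioc (-h) h, B (x - h + w) * K w ≤ Real.exp (2 * h) * B x := by
    have hpoint : ∀ w ∈ Ioc (-h) h, B (x - h + w) * K w ≤ Real.exp (2 * h) * B x * K w :=
      fun w hw => by
        refine mul_le_mul_of_nonneg_right ?_ (hK.nonneg w)
        rw [← div_le_iff₀' (Real.exp_pos _), div_eq_inv_mul, ← Real.exp_neg]
        refine le_trans ?_ (exp_sub_mul_le_of_monotone_exp_mul hB (x := x - h + w) (y := x)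
          (by linarith [hw.2]))
        gcongr
        · exact hB0 _
        · linarith [hw.1]
    calc ∫ w in Ioc (-h) h, B (x - h + w) * K w
        ≤ ∫ w in Ioc (-h) h, Real.exp (2 * h) * B x * K w :=
          setIntegral_mono_on hint.integrableOn (hK.integrable.const_mul _).integrableOn
            measurableSet_Ioc hpoint
      _ = Real.exp (2 * h) * B x * ∫ w in -h..h, K w := by
          rw [intervalIntegral.integral_of_le (by linarith), integral_const_mul]
      _ ≤ Real.exp (2 * h) * B x :=
          mul_le_of_le_one_right (mul_nonneg (Real.exp_nonneg _) (hB0 x))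
            (hK.intervalIntegral_le_one hh)
  have houtside : ∫ w in (Ioc (-h) h)ᶜ, B (x - h + w) * K w ≤ C * (1 - ∫ w in -h..h, K w) := by
    rw [← hK.integral_eq_one, intervalIntegral.integral_of_le (by linarith),
      ← setIntegral_compl measurableSet_Ioc hK.integrable, ← integral_const_mul]
    exact setIntegral_mono hint.integrableOn (hK.integrable.const_mul C).integrableOn
      fun w => mul_le_mul_of_nonneg_right (hBC _) (hK.nonneg w)
  rw [← integral_add_compl measurableSet_Ioc hint]
  exact add_le_add hinside houtside

end IsFejerKernel

/-- A kernel concentrated near the origin recovers `B` from its means up to factors close to `1`,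
because `B` cannot decrease faster than `exp (-u)`. -/
lemma tendsto_of_tendsto_fejerMean (hB : Monotone fun u => Real.exp u * B u)
    (hB0 : ∀ u, 0 ≤ B u) (hBC : ∀ u, B u ≤ C)
    (hmean : ∀ K, IsFejerKernel K → Tendsto (fun x => ∫ w, B (x + w) * K w) atTop (𝓝 A)) :
    Tendsto B atTop (𝓝 A) := by
  refine tendsto_order.2 ⟨fun a ha => ?_, fun a ha => ?_⟩
  · have hlim : Tendsto (fun η => Real.exp (2 * η) * a + C * η) (𝓝[>] 0) (𝓝 a) := by
      have : Continuous fun η => Real.exp (2 * η) * a + C * η := by fun_prop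
      simpa using (this.tendsto 0).mono_left nhdsWithin_le_nhds
    obtain ⟨η, hη, hη0⟩ := ((hlim.eventually_lt_const ha).and self_mem_nhdsWithin).exists
    obtain ⟨K, hK, hKη⟩ := IsFejerKernel.exists_lt_intervalIntegral hη0 (sub_lt_self 1 hη0)
    filter_upwards [((hmean K hK).comp
      (tendsto_atTop_add_const_right _ (-η) tendsto_id)).eventually_const_lt hη] with x hx
    have hmass : C * (1 - ∫ w in -η..η, K w) ≤ C * η :=
      mul_le_mul_of_nonneg_left (by linarith) ((hB0 0).trans (hBC 0))
    have hupper := hK.integral_le hB hB0 hBC hη0.le x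
    refine lt_of_mul_lt_mul_left ?_ (Real.exp_nonneg (2 * η))
    simp only [Function.comp_apply, id, ← sub_eq_add_neg] at hx
    linarith
  · have hlim : Tendsto (fun η => a * (Real.exp (-2 * η) * (1 - η))) (𝓝[>] 0) (𝓝 a) := by
      have : Continuous fun η => a * (Real.exp (-2 * η) * (1 - η)) := by fun_prop
      simpa using (this.tendsto 0).mono_left nhdsWithin_le_nhds
    obtain ⟨η, hη, hη0, hη1⟩ :=
      ((hlim.eventually_const_lt ha).and (Ioo_mem_nhdsGT zero_lt_one)).exists
    obtain ⟨K, hK, hKη⟩ := IsFejerKernel.exists_lt_intervalIntegral hη0 (sub_lt_self 1 hη0)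
    filter_upwards [((hmean K hK).comp
      (tendsto_atTop_add_const_right _ η tendsto_id)).eventually_lt_const hη] with x hx
    refine lt_of_mul_lt_mul_right ?_
      (mul_nonneg (Real.exp_nonneg (-2 * η)) (sub_nonneg.2 hη1.le))
    calc B x * (Real.exp (-2 * η) * (1 - η))
        ≤ B x * (Real.exp (-2 * η) * ∫ w in -η..η, K w) := by
          gcongr
          exact hB0 x
      _ ≤ ∫ w, B (x + η + w) * K w := hK.mul_le_integral hB hB0 hBC hη0.le x
      _ < a * (Real.exp (-2 * η) * (1 - η)) := hx

lemma IsFejerKernel.tendsto_setIntegral_Ioi_mul_comp_sub (hK : IsFejerKernel K) {b : ℝ → ℝ} {M : ℝ}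
    (hb : Measurable b) (hbM : ∀ u, ‖b u‖ ≤ M) {H : ℂ → ℂ} (hH : ContinuousOn H {z | 0 ≤ z.re})
    (hbH : ∀ z : ℂ, 0 < z.re → ∫ u in Ioi (0 : ℝ), (b u : ℂ) * cexp (-z * u) = H z) :
    Tendsto (fun x => ∫ u in Ioi (0 : ℝ), b u * K (u - x)) atTop (𝓝 0) := by
  obtain ⟨φ, hφc, hφs, hφ⟩ := hK.exists_fourier_eq
  have hφi : Integrable (𝓕 φ) := by
    rw [funext hφ]
    exact hK.integrable.ofReal
  have hlim := tendsto_setIntegral_Ioi_mul_fourier_sub (Complex.measurable_ofReal.comp hb)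
    (fun u => (Complex.norm_real _).trans_le (hbM u)) hH hbH hφc hφs hφi
  simp only [hφ, Function.comp_apply, ← Complex.ofReal_mul, integral_complex_ofReal] at hlim
  exact (Complex.continuous_re.tendsto 0).comp hlim

lemma setIntegral_Ioi_sub_const_mul_cexp_neg_mul (hB : Measurable B) (hBC : ∀ u, ‖B u‖ ≤ C)
    {z : ℂ} (hz : 0 < z.re) :
    ∫ u in Ioi (0 : ℝ), ((B u - A : ℝ) : ℂ) * cexp (-z * u) =
      (∫ u in Ioi (0 : ℝ), (B u : ℂ) * cexp (-z * u)) - A / z := by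
  have hexp : IntegrableOn (fun u : ℝ => cexp (-z * u)) (Ioi 0) :=
    integrableOn_exp_mul_complex_Ioi (by simpa) 0
  have hBexp : IntegrableOn (fun u => (B u : ℂ) * cexp (-z * u)) (Ioi 0) :=
    Integrable.bdd_mul (c := C) hexp (Complex.measurable_ofReal.comp hB).aestronglyMeasurable
      (.of_forall fun u => (Complex.norm_real _).trans_le (hBC u))
  simp only [ofReal_sub, sub_mul]
  rw [integral_sub hBexp (hexp.const_mul _), integral_const_mul,
    integral_exp_mul_complex_Ioi (by simpa)]
  simp [div_eq_mul_inv]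

theorem tendsto_of_laplace_eq_add_div (hB : Monotone fun u => Real.exp u * B u)
    (hB0 : ∀ u, 0 ≤ B u) (hBC : ∀ u, B u ≤ C) {H : ℂ → ℂ} (hH : ContinuousOn H {z | 0 ≤ z.re})
    (hBH : ∀ z : ℂ, 0 < z.re →
      ∫ u in Ioi (0 : ℝ), (B u : ℂ) * cexp (-z * u) = H z + A / z) :
    Tendsto B atTop (𝓝 A) := by
  have hBmeas := measurable_of_monotone_exp_mul hB
  have hBnorm : ∀ u, ‖B u‖ ≤ C := fun u => (Real.norm_of_nonneg (hB0 u)).trans_le (hBC u)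
  have hbmeas : Measurable fun u => B u - A := hBmeas.sub_const A
  have hbnorm : ∀ u, ‖B u - A‖ ≤ C + ‖A‖ := fun u =>
    (norm_sub_le _ _).trans (add_le_add_left (hBnorm u) _)
  have hbH : ∀ z : ℂ, 0 < z.re →
      ∫ u in Ioi (0 : ℝ), ((B u - A : ℝ) : ℂ) * cexp (-z * u) = H z := fun z hz => by
    rw [setIntegral_Ioi_sub_const_mul_cexp_neg_mul hBmeas hBnorm hz, hBH z hz,
      add_sub_cancel_right]
  refine tendsto_of_tendsto_fejerMean hB hB0 hBC fun K hK => ?_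
  have hpos := hK.tendsto_setIntegral_Ioi_mul_comp_sub hbmeas hbnorm hH hbH
  have hneg := tendsto_setIntegral_Iic_mul_comp_sub hbmeas hbnorm hK.integrable
  have hsum := (hneg.add hpos).add_const A
  rw [zero_add, zero_add] at hsum
  refine hsum.congr fun x => ?_
  have hint : Integrable fun u => (B u - A) * K (u - x) :=
    (hK.integrable.comp_sub_right x).bdd_mul hbmeas.aestronglyMeasurable (.of_forall hbnorm)
  rw [← compl_Iic, integral_add_compl measurableSet_Iic hint,
    ← integral_add_left_eq_self _ x]
  simp only [add_sub_cancel_left, sub_mul]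
  rw [integral_sub (hK.integrable_comp_add_mul hBmeas hBnorm x) (hK.integrable.const_mul A),
    integral_const_mul, hK.integral_eq_one, mul_one, sub_add_cancel]

end Tauberian

section WienerIkehara

open MeasureTheory Set Topology Complex

/-- The normalized summatory function `u ↦ e⁻ᵘ ∑_{1 ≤ k ≤ eᵘ} f k`: the means of `f` on the
logarithmic scale, where the Mellin transform of the Dirichlet series becomes a Laplace
transform. -/
noncomputable def expMean (f : ℕ → ℝ) (u : ℝ) : ℝ :=
  Real.exp (-u) * ∑ k ∈ Finset.Icc 1 ⌊Real.exp u⌋₊, f k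

variable {f : ℕ → ℝ} {A C : ℝ}

lemma expMean_nonneg (hf : ∀ n, 0 ≤ f n) (u : ℝ) : 0 ≤ expMean f u :=
  mul_nonneg (Real.exp_nonneg _) (Finset.sum_nonneg fun k _ => hf k)

lemma expMean_log_natCast {n : ℕ} (hn : 0 < n) :
    expMean f (Real.log n) = (∑ k ∈ Finset.Icc 1 n, f k) / n := by
  rw [expMean, Real.exp_neg, Real.exp_log (by exact_mod_cast hn), Nat.floor_natCast,
    inv_mul_eq_div]

lemma monotone_exp_mul_expMean (hf : ∀ n, 0 ≤ f n) :
    Monotone fun u => Real.exp u * expMean f u := by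
  intro u v huv
  simp only [expMean, ← mul_assoc, ← Real.exp_add, add_neg_cancel, Real.exp_zero, one_mul]
  exact Finset.sum_le_sum_of_subset_of_nonneg (Finset.Icc_subset_Icc_right
    (Nat.floor_mono (Real.exp_le_exp.2 huv))) fun k _ _ => hf k

lemma nonneg_of_sum_Icc_le_mul (hf : ∀ n, 0 ≤ f n)
    (hC : ∀ n : ℕ, ∑ k ∈ Finset.Icc 1 n, f k ≤ C * n) : 0 ≤ C :=
  (hf 1).trans (by simpa using hC 1)

lemma expMean_le (hf : ∀ n, 0 ≤ f n) (hC : ∀ n : ℕ, ∑ k ∈ Finset.Icc 1 n, f k ≤ C * n) (u : ℝ) :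
    expMean f u ≤ C := by
  rw [expMean, Real.exp_neg, inv_mul_le_iff₀ (Real.exp_pos u), mul_comm]
  refine (hC _).trans ?_
  gcongr
  · exact nonneg_of_sum_Icc_le_mul hf hC
  · exact Nat.floor_le (Real.exp_nonneg u)

lemma setIntegral_Ioi_expMean_mul_cexp (hf : ∀ n, 0 ≤ f n)
    (hC : ∀ n : ℕ, ∑ k ∈ Finset.Icc 1 n, f k ≤ C * n) {z : ℂ} (hz : 0 < z.re) :
    ∫ u in Ioi (0 : ℝ), (expMean f u : ℂ) * cexp (-z * u) =
      LSeries (fun n => (f n : ℂ)) (1 + z) / (1 + z) := by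
  have hO : (fun n : ℕ => ∑ k ∈ Finset.Icc 1 n, f k) =O[atTop] fun n : ℕ => (n : ℝ) ^ (1 : ℝ) :=
    .of_bound C <| .of_forall fun n => by
      rw [Real.norm_of_nonneg (Finset.sum_nonneg fun k _ => hf k), Real.rpow_one,
        Real.norm_of_nonneg n.cast_nonneg]
      exact hC n
  have hz1 : 1 + z ≠ 0 := ne_zero_of_re_pos (by simpa using by linarith)
  rw [eq_div_iff hz1, mul_comm, LSeries_eq_mul_integral_of_nonneg f zero_le_one (by simpa) hO hf,
    ← Real.exp_zero, ← integral_comp_exp_Ioi]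
  congr! 3 with u
  have hpow : (Real.exp u : ℂ) ^ (-(1 + z + 1)) = cexp (u * -(1 + z + 1)) := by
    rw [cpow_def_of_ne_zero (by exact_mod_cast (Real.exp_pos u).ne'),
      ← ofReal_log (Real.exp_nonneg u), Real.log_exp]
  have hexp : cexp (-u) * cexp (-z * u) = cexp u * cexp (u * -(1 + z + 1)) := by
    rw [← Complex.exp_add, ← Complex.exp_add]
    ring_nf
  rw [hpow, real_smul, expMean]
  push_cast
  linear_combination (∑ k ∈ Finset.Icc 1 ⌊Real.exp u⌋₊, (f k : ℂ)) * hexp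

/-- The **Wiener–Ikehara theorem**. -/
theorem tendsto_sum_div_of_continuousOn_LSeries_sub_pole (hf : ∀ n, 0 ≤ f n)
    (hC : ∀ n : ℕ, ∑ k ∈ Finset.Icc 1 n, f k ≤ C * n) {G : ℂ → ℂ}
    (hG : ContinuousOn G {s | 1 ≤ s.re})
    (hfG : ∀ s : ℂ, 1 < s.re → G s = LSeries (fun n => (f n : ℂ)) s - A / (s - 1)) :
    Tendsto (fun n : ℕ => (∑ k ∈ Finset.Icc 1 n, f k) / n) atTop (𝓝 A) := by
  have hne : ∀ z : ℂ, 0 ≤ z.re → 1 + z ≠ 0 := fun z hz =>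
    ne_zero_of_re_pos (by simpa using by linarith)
  have hH : ContinuousOn (fun z => (G (1 + z) - A) / (1 + z)) {z : ℂ | 0 ≤ z.re} :=
    ((hG.comp (by fun_prop) fun z hz => by simpa using hz).sub continuousOn_const).div
      (by fun_prop) hne
  have hlaplace : ∀ z : ℂ, 0 < z.re → ∫ u in Ioi (0 : ℝ), (expMean f u : ℂ) * cexp (-z * u) =
      (G (1 + z) - A) / (1 + z) + A / z := fun z hz => by
    have hz0 : z ≠ 0 := ne_zero_of_re_pos hz
    have hz1 := hne z hz.le
    rw [setIntegral_Ioi_expMean_mul_cexp hf hC hz, hfG _ (by simpa), add_sub_cancel_left]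
    field_simp
    ring
  have hlim : Tendsto (expMean f) atTop (𝓝 A) :=
    tendsto_of_laplace_eq_add_div (monotone_exp_mul_expMean hf) (expMean_nonneg hf)
      (expMean_le hf hC) hH hlaplace
  refine (hlim.comp (Real.tendsto_log_atTop.comp tendsto_natCast_atTop_atTop)).congr' ?_
  filter_upwards [eventually_gt_atTop 0] with n hn using expMean_log_natCast hn

end WienerIkehara

section PrimeDensity

open Topology ArithmeticFunction

lemma psi_natCast (n : ℕ) : Chebyshev.psi n = ∑ k ∈ Finset.Icc 1 n, Λ k := by
  rw [Chebyshev.psi, Nat.floor_natCast, ← Finset.Icc_add_one_left_eq_Ioc, zero_add]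

lemma tendsto_sum_residueClass_div {q : ℕ} [NeZero q] {a : ZMod q} (ha : IsUnit a) :
    Tendsto (fun n : ℕ => (∑ k ∈ Finset.Icc 1 n, vonMangoldt.residueClass a k) / n) atTop
      (𝓝 (q.totient : ℝ)⁻¹) := by
  refine tendsto_sum_div_of_continuousOn_LSeries_sub_pole (C := Real.log 4 + 4)
    (vonMangoldt.residueClass_nonneg a) (fun n => ?_)
    (vonMangoldt.continuousOn_LFunctionResidueClassAux a) fun s hs => ?_
  · calc ∑ k ∈ Finset.Icc 1 n, vonMangoldt.residueClass a k
        ≤ ∑ k ∈ Finset.Icc 1 n, Λ k :=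
          Finset.sum_le_sum fun k _ => vonMangoldt.residueClass_le a k
      _ = Chebyshev.psi n := (psi_natCast n).symm
      _ ≤ (Real.log 4 + 4) * n := Chebyshev.psi_le_const_mul_self n.cast_nonneg
  · rw [vonMangoldt.eqOn_LFunctionResidueClassAux ha hs]
    push_cast
    rfl

lemma tendsto_sum_vonMangoldt_filter_mem_div {q : ℕ} [NeZero q] {T : Finset (ZMod q)}
    (hT : ∀ a ∈ T, IsUnit a) :
    Tendsto (fun n : ℕ => (∑ k ∈ Finset.Icc 1 n with ((k : ℕ) : ZMod q) ∈ T, Λ k) / n) atTop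
      (𝓝 (T.card / q.totient)) := by
  have hsum := tendsto_finsetSum T fun a ha => tendsto_sum_residueClass_div (hT a ha)
  rw [Finset.sum_const, nsmul_eq_mul, ← div_eq_mul_inv] at hsum
  refine hsum.congr fun n => ?_
  rw [← Finset.sum_div, Finset.sum_comm, Finset.sum_filter]
  simp only [vonMangoldt.residueClass, Set.indicator_apply, Set.mem_ofPred_eq, Finset.sum_ite_eq]

/-- The prime counting function restricted to a set: the number of primes `p ≤ n` satisfying `P`. -/
def primeCountingOn (P : ℕ → Prop) [DecidablePred P] (n : ℕ) : ℕ :=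
  ((Finset.range (n + 1)).filter fun p => p.Prime ∧ P p).card

lemma primeCountingOn_true (n : ℕ) : primeCountingOn (fun _ => True) n = Nat.primeCounting n := by
  simp only [primeCountingOn, and_true, Nat.primeCounting, Nat.primeCounting',
    Nat.count_eq_card_filter_range]

lemma primeCountingOn_congr {P Q : ℕ → Prop} [DecidablePred P] [DecidablePred Q]
    (h : ∀ p : ℕ, p.Prime → (P p ↔ Q p)) : primeCountingOn P = primeCountingOn Q :=
  funext fun _ => congrArg Finset.card <|
    Finset.filter_congr fun p _ => and_congr_right fun hp => h p hp

lemma primeCountingOn_mul_eq_sum (P : ℕ → Prop) [DecidablePred P] (n : ℕ) (c : ℝ) :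
    primeCountingOn P n * c = ∑ k ∈ Finset.Icc 1 n with P k, if k.Prime then c else 0 := by
  have hset : (Finset.range (n + 1)).filter (fun p => p.Prime ∧ P p) =
      ((Finset.Icc 1 n).filter P).filter Nat.Prime := by
    ext p
    simp only [Finset.mem_filter, Finset.mem_range, Finset.mem_Icc]
    grind [→ Nat.Prime.one_lt]
  rw [primeCountingOn, hset, ← Finset.sum_filter, Finset.sum_const, nsmul_eq_mul]

lemma abs_sum_vonMangoldt_sub_primeCountingOn_mul_log_le (P : ℕ → Prop) [DecidablePred P]
    (n : ℕ) :
    |∑ k ∈ Finset.Icc 1 n with P k, Λ k - primeCountingOn P n * Real.log n| ≤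
      (Chebyshev.psi n - Chebyshev.theta n) +
        (Nat.primeCounting n * Real.log n - Chebyshev.theta n) := by
  have hterm : ∀ k ∈ Finset.Icc 1 n, |Λ k - if k.Prime then Real.log n else 0| ≤
      (Λ k - if k.Prime then Real.log k else 0) +
        ((if k.Prime then Real.log n else 0) - if k.Prime then Real.log k else 0) := by
    intro k hk
    obtain ⟨hk1, hkn⟩ := Finset.mem_Icc.1 hk
    have hlog : Real.log k ≤ Real.log n :=
      Real.log_le_log (by exact_mod_cast hk1) (by exact_mod_cast hkn)
    split_ifs with hp
    · rw [vonMangoldt_apply_prime hp, abs_sub_comm, abs_of_nonneg (sub_nonneg.2 hlog)]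
      simp
    · simp [abs_of_nonneg]
  have htheta : Chebyshev.theta n =
      ∑ k ∈ Finset.Icc 1 n, if k.Prime then Real.log k else 0 := by
    rw [Chebyshev.theta, Nat.floor_natCast, ← Finset.Icc_add_one_left_eq_Ioc, zero_add,
      Finset.sum_filter]
  rw [primeCountingOn_mul_eq_sum, ← Finset.sum_sub_distrib, ← primeCountingOn_true,
    primeCountingOn_mul_eq_sum, Finset.filter_true, psi_natCast, htheta, ← Finset.sum_sub_distrib,
    ← Finset.sum_sub_distrib, ← Finset.sum_add_distrib]
  calc _ ≤ ∑ k ∈ Finset.Icc 1 n with P k, |Λ k - if k.Prime then Real.log n else 0| :=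
        Finset.abs_sum_le_sum_abs _ _
    _ ≤ ∑ k ∈ Finset.Icc 1 n, |Λ k - if k.Prime then Real.log n else 0| :=
        Finset.sum_le_sum_of_subset_of_nonneg (Finset.filter_subset _ _) fun _ _ _ => abs_nonneg _
    _ ≤ _ := Finset.sum_le_sum hterm

lemma tendsto_psi_sub_theta_div :
    Tendsto (fun x : ℝ => (Chebyshev.psi x - Chebyshev.theta x) / x) atTop (𝓝 0) := by
  have hsqrt : Real.sqrt =o[atTop] (fun x : ℝ => x) := by
    refine (isLittleO_iff_tendsto' ((eventually_ne_atTop 0).mono fun x hx h => absurd h hx)).2 ?_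
    simpa only [Real.sqrt_div_self', one_div] using!
      Real.tendsto_sqrt_atTop.inv_tendsto_atTop
  exact (Chebyshev.isBigO_psi_sub_theta_sqrt.trans_isLittleO hsqrt).tendsto_div_nhds_zero

lemma tendsto_primeCounting_mul_log_sub_theta_div :
    Tendsto (fun x : ℝ => (Nat.primeCounting ⌊x⌋₊ * Real.log x - Chebyshev.theta x) / x) atTop
      (𝓝 0) := by
  have hlog : ∀ᶠ x : ℝ in atTop, Real.log x ≠ 0 :=
    (eventually_gt_atTop 1).mono fun x hx => (Real.log_pos hx).ne'
  have hbig : (fun x : ℝ => Nat.primeCounting ⌊x⌋₊ * Real.log x - Chebyshev.theta x) =O[atTop]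
      fun x : ℝ => x / Real.log x := by
    refine (Chebyshev.primeCounting_sub_theta_div_log_isBigO.mul
      (isBigO_refl Real.log atTop)).congr' ?_ ?_
    · filter_upwards [hlog] with x hx
      field_simp
    · filter_upwards [hlog] with x hx
      field_simp
  have hinv : (fun x : ℝ => (Real.log x)⁻¹) =o[atTop] (fun _ => (1 : ℝ)) :=
    (isLittleO_one_iff ℝ).2 Real.tendsto_log_atTop.inv_tendsto_atTop
  have hsmall : (fun x : ℝ => x / Real.log x) =o[atTop] (fun x : ℝ => x) := by
    simpa only [div_eq_mul_inv, mul_one] using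
      (isBigO_refl (fun x : ℝ => x) atTop).mul_isLittleO hinv
  exact (hbig.trans_isLittleO hsmall).tendsto_div_nhds_zero

lemma tendsto_primeCountingOn_mul_log_div {P : ℕ → Prop} [DecidablePred P] {c : ℝ}
    (h : Tendsto (fun n : ℕ => (∑ k ∈ Finset.Icc 1 n with P k, Λ k) / n) atTop (𝓝 c)) :
    Tendsto (fun n : ℕ => primeCountingOn P n * Real.log n / n) atTop (𝓝 c) := by
  have herr := (tendsto_psi_sub_theta_div.add tendsto_primeCounting_mul_log_sub_theta_div).comp
    tendsto_natCast_atTop_atTop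
  rw [add_zero] at herr
  have hdiff : Tendsto (fun n : ℕ => (∑ k ∈ Finset.Icc 1 n with P k, Λ k) / n -
      primeCountingOn P n * Real.log n / n) atTop (𝓝 0) := by
    refine squeeze_zero_norm (fun n => ?_) herr
    rw [← sub_div, norm_div, RCLike.norm_natCast, Function.comp_apply, ← add_div,
      Nat.floor_natCast]
    gcongr
    exact abs_sum_vonMangoldt_sub_primeCountingOn_mul_log_le P n
  simpa using h.sub hdiff

lemma isEquivalent_primeCountingOn {P : ℕ → Prop} [DecidablePred P] {c : ℝ} (hc : c ≠ 0)
    (h : Tendsto (fun n : ℕ => (∑ k ∈ Finset.Icc 1 n with P k, Λ k) / n) atTop (𝓝 c)) :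
    (fun n => (primeCountingOn P n : ℝ)) ~[atTop] fun n : ℕ => c * (n / Real.log n) := by
  have hmul := ((isEquivalent_const_iff_tendsto hc).2
    (tendsto_primeCountingOn_mul_log_div h)).mul
      (IsEquivalent.refl (u := fun n : ℕ => (n : ℝ) / Real.log n))
  refine hmul.congr_left ?_
  filter_upwards [eventually_gt_atTop 1] with n hn
  have hlog : Real.log n ≠ 0 := (Real.log_pos (by exact_mod_cast hn)).ne'
  have hn0 : (n : ℝ) ≠ 0 := by positivity
  simp only [Pi.mul_apply]
  field_simp

theorem isEquivalent_primeCounting :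
    (fun n => (Nat.primeCounting n : ℝ)) ~[atTop] fun n : ℕ => n / Real.log n := by
  have h := isEquivalent_primeCountingOn (P := fun _ => True) one_ne_zero (by
    simpa only [Finset.mem_univ, Finset.filter_true, Finset.card_univ, ZMod.card,
      Nat.totient_one, Nat.cast_one, div_one] using
      tendsto_sum_vonMangoldt_filter_mem_div (q := 1) (T := Finset.univ)
        fun a _ => isUnit_of_subsingleton a)
  simpa only [primeCountingOn_true, one_mul] using h

theorem isEquivalent_primeCountingOn_mem {q : ℕ} [NeZero q] {T : Finset (ZMod q)}
    (hT : ∀ a ∈ T, IsUnit a) (hne : T.Nonempty) :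
    (fun n => (primeCountingOn (fun p => (p : ZMod q) ∈ T) n : ℝ)) ~[atTop]
      fun n => T.card / q.totient * Nat.primeCounting n := by
  have hc : (T.card / q.totient : ℝ) ≠ 0 := by
    have := Nat.totient_pos.2 (NeZero.pos q)
    have := hne.card_pos
    positivity
  exact (isEquivalent_primeCountingOn hc (tendsto_sum_vonMangoldt_filter_mem_div hT)).trans
    (IsEquivalent.refl.mul isEquivalent_primeCounting.symm)

end PrimeDensity

section QuadraticCharacter

lemma exists_odd_prime_pow_mul_of_not_isSquare {n : ℕ} (hn : ¬IsSquare n) :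
    ∃ p k e : ℕ, p.Prime ∧ Odd k ∧ ¬p ∣ e ∧ n = p ^ k * e := by
  obtain ⟨d, m, rfl, hd⟩ := Nat.sq_mul_squarefree n
  have hd1 : d ≠ 1 := fun h => hn (by simp [h, IsSquare.sq])
  have hm0 : m ≠ 0 := fun h => hn (by simp [h])
  obtain ⟨p, hp, e, rfl⟩ := Nat.exists_prime_and_dvd hd1
  obtain ⟨j, m', hpm', rfl⟩ := Nat.exists_eq_pow_mul_and_not_dvd hm0 p hp.ne_one
  have hpe : ¬p ∣ e := fun h => hp.not_isUnit (hd p (mul_dvd_mul_left p h))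
  refine ⟨p, 2 * j + 1, m' ^ 2 * e, hp, odd_two_mul_add_one j, fun h => ?_, by ring⟩
  exact (hp.dvd_mul.1 h).elim (fun h => hpm' (hp.dvd_of_dvd_pow h)) hpe

lemma jacobiSym_eq_one_of_modEq {D : ℤ} {b : ℕ} (hb : b ≡ 1 [MOD 4 * D.natAbs]) (hodd : Odd b) :
    jacobiSym D b = 1 := by
  rw [jacobiSym.mod_right D hodd, hb]
  rcases Nat.eq_zero_or_pos D.natAbs with h | h
  · simp [h]
  · rw [Nat.mod_eq_of_lt (by lia), jacobiSym.one_right]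

/-- Take `b` to be `1` modulo `4|e|` and a quadratic nonresidue modulo `p`. -/
lemma exists_jacobiSym_prime_pow_mul_eq_neg_one {p k : ℕ} (hp : p.Prime) (hp2 : p ≠ 2)
    (hk : Odd k) {e : ℤ} (hpe : ¬(p : ℤ) ∣ e) :
    ∃ b : ℕ, Odd b ∧ jacobiSym (p ^ k * e) b = -1 := by
  have : Fact p.Prime := ⟨hp⟩
  obtain ⟨r, hr⟩ := quadraticChar_exists_neg_one (F := ZMod p) (by rwa [ZMod.ringChar_zmod_n])
  have hcop : p.Coprime (4 * e.natAbs) := by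
    refine Nat.Coprime.mul_right ?_ (hp.coprime_iff_not_dvd.2 (Int.natCast_dvd.not.1 hpe))
    exact Nat.Coprime.pow_right 2 ((Nat.coprime_primes hp Nat.prime_two).2 hp2)
  obtain ⟨b, hbp, hbe⟩ := Nat.chineseRemainder hcop r.val 1
  have hb4 : b % 4 = 1 := hbe.of_mul_right e.natAbs
  have hodd : Odd b := Nat.odd_iff.2 (Nat.odd_of_mod_four_eq_one hb4)
  have hbr : (b : ZMod p) = r := by
    rw [(ZMod.natCast_eq_natCast_iff b r.val p).2 hbp, ZMod.natCast_zmod_val]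
  have hJp : jacobiSym p b = -1 := by
    rw [jacobiSym.quadratic_reciprocity_one_mod_four' (hp.odd_of_ne_two hp2) hb4,
      ← jacobiSym.legendreSym.to_jacobiSym, legendreSym, Int.cast_natCast, hbr, hr]
  refine ⟨b, hodd, ?_⟩
  rw [jacobiSym.mul_left, jacobiSym.pow_left, hJp, hk.neg_one_pow,
    jacobiSym_eq_one_of_modEq hbe hodd, mul_one]

lemma exists_modEq_eight_jacobiSym_mul_sq {m : ℕ} (hm : Odd m) (c : ℕ) :
    ∃ b : ℕ, b % 8 = c % 8 ∧ ∀ a : ℤ, jacobiSym (a * m ^ 2) b = jacobiSym a b := by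
  have hcop : Nat.Coprime 8 m := (Nat.coprime_two_left.2 hm).pow_left 3
  obtain ⟨b, hb8, hbm⟩ := Nat.chineseRemainder hcop c 1
  refine ⟨b, hb8, fun a => ?_⟩
  have hbm' : (m : ℤ).gcd b = 1 := by
    rw [Int.gcd_natCast_natCast, Nat.gcd_comm, hbm.gcd_eq, Nat.gcd_one_left]
  rw [jacobiSym.mul_left, jacobiSym.sq_one' hbm', mul_one]

lemma exists_jacobiSym_two_pow_mul_sq_eq_neg_one {s : ℤ} (hs : s = 1 ∨ s = -1) {j m : ℕ}
    (hm : Odd m) (hD : ¬IsSquare (s * 2 ^ j * m ^ 2 : ℤ)) :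
    ∃ b : ℕ, Odd b ∧ jacobiSym (s * 2 ^ j * m ^ 2) b = -1 := by
  rcases Nat.even_or_odd j with hj | hj
  · obtain ⟨b, hb, hJ⟩ := exists_modEq_eight_jacobiSym_mul_sq hm 3
    have hodd : Odd b := by rw [Nat.odd_iff]; lia
    have hs' : s = -1 := hs.resolve_left fun h => hD <| by
      rw [h, one_mul]
      exact (hj.isSquare_pow 2).mul (IsSquare.sq _)
    refine ⟨b, hodd, ?_⟩
    rw [hJ, jacobiSym.mul_left, jacobiSym.pow_left, hs', jacobiSym.at_neg_one hodd,
      jacobiSym.at_two hodd, ZMod.χ₄_nat_three_mod_four (by lia), ZMod.χ₈_nat_eq_if_mod_eight]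
    simp [hb, Nat.odd_iff.1 hodd, hj.neg_one_pow]
  · obtain ⟨b, hb, hJ⟩ := exists_modEq_eight_jacobiSym_mul_sq hm 5
    have hodd : Odd b := by rw [Nat.odd_iff]; lia
    have hJs : jacobiSym s b = 1 := by
      rcases hs with rfl | rfl
      · exact jacobiSym.one_left b
      · rw [jacobiSym.at_neg_one hodd, ZMod.χ₄_nat_one_mod_four (by lia)]
    have hJ2 : jacobiSym 2 b = -1 := by
      rw [jacobiSym.at_two hodd, ZMod.χ₈_nat_eq_if_mod_eight]
      grind
    exact ⟨b, hodd, by rw [hJ, jacobiSym.mul_left, jacobiSym.pow_left, hJs, hJ2, hj.neg_one_pow,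
      one_mul]⟩

theorem exists_odd_jacobiSym_eq_neg_one {D : ℤ} (hD : ¬IsSquare D) :
    ∃ b : ℕ, Odd b ∧ jacobiSym D b = -1 := by
  have hD0 : D.natAbs ≠ 0 := Int.natAbs_ne_zero.2 fun h => hD (h ▸ IsSquare.zero)
  obtain ⟨s, hs, hDs⟩ : ∃ s : ℤ, (s = 1 ∨ s = -1) ∧ D = s * D.natAbs := by
    rcases Int.natAbs_eq D with h | h
    · exact ⟨1, .inl rfl, by rwa [one_mul]⟩
    · exact ⟨-1, .inr rfl, by rwa [neg_one_mul]⟩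
  obtain ⟨j, n, hn, hDn⟩ := Nat.exists_eq_two_pow_mul_odd hD0
  rw [hDn, Nat.cast_mul, Nat.cast_pow, Nat.cast_ofNat, ← mul_assoc] at hDs
  by_cases hsq : IsSquare n
  · obtain ⟨m, rfl⟩ := isSquare_iff_exists_sq n |>.1 hsq
    rw [Nat.cast_pow] at hDs
    subst hDs
    exact exists_jacobiSym_two_pow_mul_sq_eq_neg_one hs (Nat.odd_pow_iff two_ne_zero |>.1 hn) hD
  · obtain ⟨p, k, e, hp, hk, hpe, rfl⟩ := exists_odd_prime_pow_mul_of_not_isSquare hsq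
    have hp2 : p ≠ 2 := by
      rintro rfl
      exact Nat.not_even_iff_odd.2 hn ((even_two.pow_of_ne_zero hk.pos.ne').mul_right e)
    have hpe' : ¬(p : ℤ) ∣ s * 2 ^ j * e := by
      rw [Int.natCast_dvd, Int.natAbs_mul, Int.natAbs_mul, Int.natAbs_pow]
      have hs1 : s.natAbs = 1 := by rcases hs with rfl | rfl <;> rfl
      rw [hs1, one_mul]
      exact fun h => (hp.dvd_mul.1 h).elim
        (fun h => hp2 ((Nat.prime_dvd_prime_iff_eq hp Nat.prime_two).1 (hp.dvd_of_dvd_pow h))) hpe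
    obtain ⟨b, hb⟩ := exists_jacobiSym_prime_pow_mul_eq_neg_one hp hp2 hk hpe'
    refine ⟨b, ?_⟩
    rwa [hDs, show s * 2 ^ j * ((p ^ k * e : ℕ) : ℤ) = p ^ k * (s * 2 ^ j * e) by push_cast; ring]

lemma two_mul_card_filter_eq_neg_one {G : Type*} [Group G] [Fintype G] (χ : G →* ℤ)
    (h : ∃ g, χ g = -1) : 2 * (Finset.univ.filter fun g => χ g = -1).card = Fintype.card G := by
  have hfiber : (Finset.univ.filter fun g => χ g = 1).card =
      (Finset.univ.filter fun g => χ g = -1).card :=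
    MonoidHom.card_fiber_eq_of_mem_range χ ⟨1, map_one χ⟩ h
  have hcompl : (Finset.univ.filter fun g => ¬χ g = -1) = Finset.univ.filter fun g => χ g = 1 :=
    Finset.filter_congr fun g _ => by
      have := Int.isUnit_iff.1 ((Group.isUnit g).map χ)
      grind
  have hsplit := Finset.univ.card_filter_add_card_filter_not (fun g => χ g = -1)
  rwa [hcompl, hfiber, ← two_mul, Finset.card_univ] at hsplit

lemma odd_of_isUnit_natCast {N b : ℕ} (h : IsUnit (b : ZMod (4 * N))) : Odd b := by
  rw [ZMod.isUnit_iff_coprime] at h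
  exact Nat.coprime_two_right.1 (h.coprime_dvd_right ⟨2 * N, by ring⟩)

/-- The quadratic character `u ↦ (D/u)` on the units modulo `4|D|`; the Jacobi symbol of `D` is
read off at the least nonnegative representative. -/
def jacobiHom (D : ℤ) : (ZMod (4 * D.natAbs))ˣ →* ℤ where
  toFun u := jacobiSym D (u : ZMod (4 * D.natAbs)).val
  map_one' := by rw [Units.val_one, ZMod.val_one'' (by lia), jacobiSym.one_right]
  map_mul' u v := by
    have hodd (w : (ZMod (4 * D.natAbs))ˣ) : Odd (w : ZMod (4 * D.natAbs)).val :=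
      Nat.coprime_two_right.1
        ((ZMod.val_coe_unit_coprime w).coprime_dvd_right ⟨2 * D.natAbs, by ring⟩)
    rw [Units.val_mul, ZMod.val_mul, ← jacobiSym.mod_right D ((hodd u).mul (hodd v)),
      jacobiSym.mul_right' D (hodd u).pos.ne' (hodd v).pos.ne']

lemma jacobiHom_eq_jacobiSym {D : ℤ} {b : ℕ} {u : (ZMod (4 * D.natAbs))ˣ}
    (hu : (u : ZMod (4 * D.natAbs)) = b) : jacobiHom D u = jacobiSym D b := by
  have hodd : Odd b := odd_of_isUnit_natCast (hu ▸ u.isUnit)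
  rw [jacobiSym.mod_right D hodd, ← ZMod.val_natCast, ← hu]
  rfl

lemma isUnit_natCast_of_jacobiSym_ne_zero {D : ℤ} {b : ℕ} (hb : Odd b) (h : jacobiSym D b ≠ 0) :
    IsUnit (b : ZMod (4 * D.natAbs)) := by
  have : NeZero b := ⟨hb.pos.ne'⟩
  have hgcd : D.gcd b = 1 := by
    by_contra hgcd
    exact h (jacobiSym.eq_zero_iff_not_coprime.2 hgcd)
  rw [ZMod.isUnit_iff_coprime]
  refine Nat.Coprime.mul_right ((Nat.coprime_two_right.2 hb).pow_right 2) ?_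
  rwa [Nat.coprime_comm]

lemma jacobiSym_two_ne_neg_one (D : ℤ) : jacobiSym D 2 ≠ -1 := by
  rw [jacobiSym.mod_left]
  rcases Int.emod_two_eq_zero_or_one D with h | h <;>
    simp [h, jacobiSym.zero_left one_lt_two]

/-- The reduced residue classes modulo `4|D|` on which the quadratic character of `D` is `-1`. -/
def nonresidueClasses (D : ℤ) [NeZero D] : Finset (ZMod (4 * D.natAbs)) :=
  (Finset.univ.filter fun u => jacobiHom D u = -1).map ⟨Units.val, Units.val_injective⟩

lemma mem_nonresidueClasses {D : ℤ} [NeZero D] {a : ZMod (4 * D.natAbs)} :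
    a ∈ nonresidueClasses D ↔ ∃ u, jacobiHom D u = -1 ∧ (u : ZMod (4 * D.natAbs)) = a := by
  simp [nonresidueClasses]

lemma natCast_prime_mem_nonresidueClasses_iff {D : ℤ} [NeZero D] {p : ℕ} (hp : p.Prime) :
    (p : ZMod (4 * D.natAbs)) ∈ nonresidueClasses D ↔ jacobiSym D p = -1 := by
  rw [mem_nonresidueClasses]
  refine ⟨fun ⟨u, hu, hup⟩ => jacobiHom_eq_jacobiSym hup ▸ hu, fun h => ?_⟩
  have hodd : Odd p := hp.odd_of_ne_two fun h2 => jacobiSym_two_ne_neg_one D (h2 ▸ h)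
  obtain ⟨u, hu⟩ := isUnit_natCast_of_jacobiSym_ne_zero hodd (by rw [h]; decide)
  exact ⟨u, by rw [jacobiHom_eq_jacobiSym hu, h], hu⟩

lemma isUnit_of_mem_nonresidueClasses {D : ℤ} [NeZero D] {a : ZMod (4 * D.natAbs)}
    (ha : a ∈ nonresidueClasses D) : IsUnit a := by
  obtain ⟨u, -, rfl⟩ := mem_nonresidueClasses.1 ha
  exact u.isUnit

lemma nonresidueClasses_nonempty {D : ℤ} [NeZero D] (hD : ¬IsSquare D) :
    (nonresidueClasses D).Nonempty := by
  obtain ⟨b, hodd, hb⟩ := exists_odd_jacobiSym_eq_neg_one hD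
  obtain ⟨u, hu⟩ := isUnit_natCast_of_jacobiSym_ne_zero hodd (by rw [hb]; decide)
  exact ⟨u, mem_nonresidueClasses.2 ⟨u, by rw [jacobiHom_eq_jacobiSym hu, hb], rfl⟩⟩

theorem card_nonresidueClasses_div_totient {D : ℤ} [NeZero D] (hD : ¬IsSquare D) :
    ((nonresidueClasses D).card : ℝ) / (4 * D.natAbs).totient = 1 / 2 := by
  have hne := nonresidueClasses_nonempty hD
  obtain ⟨u, hu, -⟩ := mem_nonresidueClasses.1 hne.choose_spec
  have hcard : 2 * (nonresidueClasses D).card = (4 * D.natAbs).totient := by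
    rw [nonresidueClasses, Finset.card_map, ← ZMod.card_units_eq_totient]
    exact two_mul_card_filter_eq_neg_one _ ⟨u, hu⟩
  have hpos : ((nonresidueClasses D).card : ℝ) ≠ 0 := by exact_mod_cast hne.card_pos.ne'
  rw [← hcard, Nat.cast_mul, Nat.cast_ofNat]
  field_simp

end QuadraticCharacter

theorem stmt_1 (D : ℤ) (hD : ¬ IsSquare D) :
    IsEquivalent atTop
      (fun x : ℕ => (((Finset.range (x + 1)).filter
        (fun p => p.Prime ∧ jacobiSym D p = -1)).card : ℝ))
      (fun x : ℕ => (Nat.primeCounting x : ℝ) / 2) := by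
  have : NeZero D := ⟨fun h => hD (h ▸ IsSquare.zero)⟩
  have h := isEquivalent_primeCountingOn_mem (fun _ => isUnit_of_mem_nonresidueClasses)
    (nonresidueClasses_nonempty hD)
  rw [card_nonresidueClasses_div_totient hD,
    primeCountingOn_congr fun p hp => natCast_prime_mem_nonresidueClasses_iff hp] at h
  simpa only [primeCountingOn, one_div_mul_eq_div] using h
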